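/- arXiv:2303.17140 — 2 statements merged into one kernel-verified Lean document; each statement's English description precedes it below -/
import Mathlib

section
/- There exist absolute constants 0 < c ≤ C such that for every integer n ≥ 3, every real l ≥ 2 and every (a_1,…,a_{n−2}) ∈ ℕ^{n−2}, the set H̃_n = ⋃ I_{n+1}(a_1,…,a_{n+1}), where the union is over all a_{n−1}, a_n, a_{n+1} ∈ ℕ with 1 ≤ a_{n−1}a_n < l and a_n a_{n+1} ≥ l, satisfies c·(log l)/l·|I_{n−2}(a_1,…,a_{n−2})| ≤ ℒ(H̃_n) ≤ C·(log l)/l·|I_{n−2}(a_1,…,a_{n−2})|. -/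
/-!
Write `m = n - 2` and let `S` be the set of irrationals of `(0,1)`. The inverse branch of `T^m` on the
cylinder `I_m(a_1,…,a_m)` is the Möbius map `φ(t) = (p + t p') / (q + t q')` with `|p' q - p q'| = 1` and
`0 ≤ q' ≤ q`, so `|φ'|` lies between `1/(4q²)` and `1/q²` on `(0,1)`. By the change of variables
formula, the points of the cylinder that `T^m` sends into a measurable set `E ⊆ S` have measure between
`ℒ(E)/(4q²)` and `ℒ(E)/q²` (`cylPre_bounds`). Comparing with `E = S`, this measure is
`|I_m|·ℒ(E)` up to a factor `4`.

The set `H̃_n` is of this form, with `E = targetSet l`, the set of `t ∈ S` with `a_1 a_2 < l ≤ a_2 a_3`.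
Applying the same bounds to cylinders `I_2(b,c)`, and using that `a_1(y) ≥ l/c` means
`y ≤ 1/⌈l/c⌉`, the part of `targetSet l` in `I_2(b,c)` has measure `≍ 1/(b² c l)`. Summing over `bc < l`,
with `∑ 1/b² ≤ 2` for the upper bound and the terms `b = 1` alone for the lower bound, the harmonic sum
over `c < l` gives `ℒ(targetSet l) ≍ (log l)/l`.
-/

open scoped ENNReal
open MeasureTheory Filter

/-- The Gauss map `T(x) = 1/x - ⌊1/x⌋`. -/
noncomputable def gaussMap (x : ℝ) : ℝ := 1 / x - ⌊1 / x⌋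

/-- The `n`-th partial quotient `a_n(x) = ⌊1 / T^{n-1}(x)⌋` (for `n ≥ 1`). -/
noncomputable def pq (x : ℝ) (n : ℕ) : ℕ := ⌊1 / (gaussMap^[n - 1] x)⌋₊

/-- The set `F₂(φ)` of irrational `x ∈ (0,1)` such that for infinitely many `n` there are
`1 ≤ k ≠ l ≤ n` with `a_k a_{k+1} ≥ φ(n)` and `a_l a_{l+1} ≥ φ(n)`. -/
def F2 (φ : ℕ → ℝ) : Set ℝ :=
  {x | x ∈ Set.Ioo (0 : ℝ) 1 ∧ Irrational x ∧
    {n : ℕ | ∃ k l : ℕ, 1 ≤ k ∧ k ≤ n ∧ 1 ≤ l ∧ l ≤ n ∧ k ≠ l ∧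
      φ n ≤ (pq x k : ℝ) * (pq x (k + 1) : ℝ) ∧
      φ n ≤ (pq x l : ℝ) * (pq x (l + 1) : ℝ)}.Infinite}

/-- The cylinder `I_n(a_1,…,a_n)`: irrationals in `(0,1)` whose first `n` partial quotients
are `a 1, …, a n`. -/
def cyl (n : ℕ) (a : ℕ → ℕ) : Set ℝ :=
  {x | x ∈ Set.Ioo (0 : ℝ) 1 ∧ Irrational x ∧ ∀ i : ℕ, 1 ≤ i → i ≤ n → pq x i = a i}

/-- `H̃_n`: the union of the cylinders `I_{n+1}(a_1,…,a_{n+1})` over all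
`a_{n-1}, a_n, a_{n+1} ∈ ℕ` with `1 ≤ a_{n-1} a_n < l` and `a_n a_{n+1} ≥ l`. -/
def Htilde (n : ℕ) (l : ℝ) (a : ℕ → ℕ) : Set ℝ :=
  ⋃ (b : ℕ) (c : ℕ) (d : ℕ) (_ : 1 ≤ b) (_ : 1 ≤ c) (_ : 1 ≤ d)
    (_ : 1 ≤ b * c) (_ : ((b * c : ℕ) : ℝ) < l) (_ : l ≤ ((c * d : ℕ) : ℝ)),
    cyl (n + 1) (Function.update (Function.update (Function.update a (n - 1) b) n c) (n + 1) d)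

/-! ### The Gauss map on the irrationals of the unit interval -/

/-- The irrational numbers in `(0,1)`. -/
def irrUnit : Set ℝ := {x | x ∈ Set.Ioo (0 : ℝ) 1 ∧ Irrational x}

theorem gaussMap_mem {x : ℝ} (hx : x ∈ irrUnit) : gaussMap x ∈ irrUnit := by
  have hi : Irrational (gaussMap x) := by
    unfold gaussMap
    rw [one_div]
    exact (irrational_sub_intCast_iff).2 (irrational_inv_iff.2 hx.2)
  have e : gaussMap x = Int.fract (1 / x) := rfl
  refine ⟨⟨lt_of_le_of_ne ?_ hi.ne_zero.symm, ?_⟩, hi⟩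
  · rw [e]; exact Int.fract_nonneg _
  · rw [e]; exact Int.fract_lt_one _

theorem gaussMap_iterate_mem {x : ℝ} (hx : x ∈ irrUnit) (m : ℕ) : gaussMap^[m] x ∈ irrUnit := by
  induction m with
  | zero => exact hx
  | succ k ih => rw [Function.iterate_succ_apply']; exact gaussMap_mem ih

theorem pq_add (x : ℝ) (m i : ℕ) : pq x (m + (i + 1)) = pq (gaussMap^[m] x) (i + 1) := by
  unfold pq
  rw [← Function.iterate_add_apply]
  congr 4
  omega

theorem pq_pos {x : ℝ} (hx : x ∈ irrUnit) (i : ℕ) : 1 ≤ pq x i := by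
  have h := (gaussMap_iterate_mem hx (i - 1)).1
  unfold pq
  rw [Nat.one_le_floor_iff, le_div_iff₀ h.1]
  linarith [h.2]

theorem measurable_gaussMap : Measurable gaussMap := by
  have : gaussMap = fun x => Int.fract (1 / x) := rfl
  rw [this]
  fun_prop

theorem measurable_pq (i : ℕ) : Measurable fun x => pq x i := by
  unfold pq
  exact Nat.measurable_floor.comp ((measurable_gaussMap.iterate _).const_div 1)

theorem measurableSet_irrUnit : MeasurableSet irrUnit := by
  refine measurableSet_Ioo.inter ?_
  exact (Set.countable_range ((↑) : ℚ → ℝ)).measurableSet.compl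

/-- The inverse branch `t ↦ 1 / (k + t)` of the Gauss map inverts it on the points with first
partial quotient `k`. -/
theorem branch_image (k : ℕ) (hk : 1 ≤ k) (E : Set ℝ) (hE : E ⊆ irrUnit) :
    (fun t : ℝ => 1 / ((k : ℝ) + t)) '' E = {y | y ∈ irrUnit ∧ pq y 1 = k ∧ gaussMap y ∈ E} := by
  have hk' : (1 : ℝ) ≤ k := by exact_mod_cast hk
  ext y
  constructor
  · rintro ⟨t, ht, rfl⟩
    obtain ⟨⟨h0, h1⟩, hi⟩ := hE ht
    have hfl : ⌊(k : ℝ) + t⌋ = (k : ℤ) := by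
      rw [Int.floor_eq_iff]; constructor <;> push_cast <;> linarith
    refine ⟨⟨⟨by positivity, ?_⟩, ?_⟩, ?_, ?_⟩
    · rw [div_lt_one (by positivity)]; linarith
    · show Irrational (1 / ((k : ℝ) + t))
      rw [one_div, irrational_inv_iff]
      exact irrational_natCast_add_iff.2 hi
    · show ⌊1 / (1 / ((k : ℝ) + t))⌋₊ = k
      rw [one_div_one_div, Nat.floor_eq_iff (by positivity)]
      constructor <;> linarith
    · show 1 / (1 / ((k : ℝ) + t)) - ⌊1 / (1 / ((k : ℝ) + t))⌋ ∈ E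
      rw [one_div_one_div, hfl]
      simpa using ht
  · rintro ⟨hy, hp, hE'⟩
    refine ⟨gaussMap y, hE', ?_⟩
    have hp' : ⌊1 / y⌋₊ = k := hp
    have hpos : 0 < 1 / y := one_div_pos.2 hy.1.1
    have hfl : ((⌊1 / y⌋ : ℤ) : ℝ) = k := by
      rw [← hp', natCast_floor_eq_intCast_floor hpos.le]
    show 1 / ((k : ℝ) + (1 / y - ⌊1 / y⌋)) = y
    rw [hfl]; simp

/-! ### Inverse branches of iterates and bounded distortion -/

/-- The points of the cylinder `I_m(a_1,…,a_m)` that the `m`-th iterate of the Gauss map sends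
into `E`. -/
def cylPre (m : ℕ) (a : ℕ → ℕ) (E : Set ℝ) : Set ℝ := {x | x ∈ cyl m a ∧ gaussMap^[m] x ∈ E}

/-- The consecutive continuant denominators `(q_m, q_{m-1})` of `[a_1, a_2, …]`, with
`(q_0, q_{-1}) = (1, 0)`. -/
def dens (a : ℕ → ℕ) : ℕ → ℝ × ℝ
  | 0 => (1, 0)
  | m + 1 => ((dens a m).1 * a (m + 1) + (dens a m).2, (dens a m).1)

theorem cylPre_irrUnit (m : ℕ) (a : ℕ → ℕ) : cylPre m a irrUnit = cyl m a := by
  ext x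
  exact ⟨fun h => h.1, fun h => ⟨h, gaussMap_iterate_mem ⟨h.1, h.2.1⟩ m⟩⟩

theorem cyl_succ (m : ℕ) (a : ℕ → ℕ) (x : ℝ) :
    x ∈ cyl (m + 1) a ↔ x ∈ cyl m a ∧ pq (gaussMap^[m] x) 1 = a (m + 1) := by
  rw [← pq_add x m 0]
  constructor
  · rintro ⟨h1, h2, h3⟩
    exact ⟨⟨h1, h2, fun i hi hi' => h3 i hi (by omega)⟩, h3 _ (by omega) le_rfl⟩
  · rintro ⟨⟨h1, h2, h3⟩, h4⟩
    refine ⟨h1, h2, fun i hi hi' => ?_⟩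
    rcases Nat.lt_or_ge m i with h | h
    · obtain rfl : i = m + 1 := by omega
      exact h4
    · exact h3 i hi h

theorem dens_bounds (a : ℕ → ℕ) (m : ℕ) (ha : ∀ i, 1 ≤ i → i ≤ m → 1 ≤ a i) :
    1 ≤ (dens a m).1 ∧ 0 ≤ (dens a m).2 ∧ (dens a m).2 ≤ (dens a m).1 := by
  induction m with
  | zero => simp [dens]
  | succ k ih =>
    obtain ⟨h1, h2, h3⟩ := ih fun i hi hi' => ha i hi (by omega)
    have h4 : (1 : ℝ) ≤ a (k + 1) := by exact_mod_cast ha (k + 1) (by omega) le_rfl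
    simp only [dens]
    refine ⟨by nlinarith, by linarith, by nlinarith⟩

/-- The inverse branch of `T^m` on a cylinder is a Möbius map of determinant `±1` with denominator
`q_m + t q_{m-1}`: composing with `t ↦ 1 / (a_{m+1} + t)` reproduces the continuant recursion. -/
theorem cylPre_eq_image (a : ℕ → ℕ) (m : ℕ) (ha : ∀ i, 1 ≤ i → i ≤ m → 1 ≤ a i) :
    ∃ p p' : ℝ, |p' * (dens a m).1 - p * (dens a m).2| = 1 ∧
      ∀ E ⊆ irrUnit, cylPre m a E =
        (fun t => (p + t * p') / ((dens a m).1 + t * (dens a m).2)) '' E := by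
  induction m with
  | zero =>
    refine ⟨0, 1, by simp [dens], fun E hE => ?_⟩
    ext x
    simp only [dens, cylPre, cyl, Set.mem_ofPred_eq, Function.iterate_zero, id]
    simp only [zero_add, mul_one, mul_zero, add_zero, div_one, Set.image_id']
    constructor
    · exact fun h => h.2
    · exact fun h => ⟨⟨(hE h).1, (hE h).2, fun i _ _ => by omega⟩, h⟩
  | succ k ih =>
    have ha' : ∀ i, 1 ≤ i → i ≤ k → 1 ≤ a i := fun i hi hi' => ha i hi (by omega)
    obtain ⟨p, p', hdet, him⟩ := ih ha'
    obtain ⟨hq, hq', hqq⟩ := dens_bounds a k ha'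
    have hk : 1 ≤ a (k + 1) := ha (k + 1) (by omega) le_rfl
    have hk' : (1 : ℝ) ≤ a (k + 1) := by exact_mod_cast hk
    refine ⟨p * a (k + 1) + p', p, ?_, fun E hE => ?_⟩
    · rw [← hdet, ← abs_neg]
      simp only [dens]
      congr 1
      ring
    · have hsub : {y | y ∈ irrUnit ∧ pq y 1 = a (k + 1) ∧ gaussMap y ∈ E} ⊆ irrUnit :=
        fun y hy => hy.1
      have h1 : cylPre (k + 1) a E =
          cylPre k a {y | y ∈ irrUnit ∧ pq y 1 = a (k + 1) ∧ gaussMap y ∈ E} := by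
        ext x
        simp only [cylPre, Set.mem_ofPred_eq, cyl_succ, Function.iterate_succ_apply']
        constructor
        · rintro ⟨⟨hx, h⟩, h'⟩
          exact ⟨hx, gaussMap_iterate_mem ⟨hx.1, hx.2.1⟩ k, h, h'⟩
        · rintro ⟨hx, _, h, h'⟩
          exact ⟨⟨hx, h⟩, h'⟩
      rw [h1, him _ hsub, ← branch_image _ hk E hE, Set.image_image]
      refine Set.image_congr fun t ht => ?_
      have ht0 := (hE ht).1.1
      have hne : (a (k + 1) : ℝ) + t ≠ 0 := by positivity
      simp only [dens]
      rw [← mul_div_mul_right (p + _) _ hne]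
      congr 1 <;> field_simp <;> ring

/-- The derivative of the inverse branch has absolute value `1/(q_m + t q_{m-1})²`, which lies between
`1/(4 q_m²)` and `1/q_m²` because `0 ≤ q_{m-1} ≤ q_m`. -/
theorem cylPre_bounds (a : ℕ → ℕ) (m : ℕ) (ha : ∀ i, 1 ≤ i → i ≤ m → 1 ≤ a i)
    (E : Set ℝ) (hE : E ⊆ irrUnit) (hm : MeasurableSet E) :
    ENNReal.ofReal (1 / (4 * (dens a m).1 ^ 2)) * volume E ≤ volume (cylPre m a E) ∧
    volume (cylPre m a E) ≤ ENNReal.ofReal (1 / (dens a m).1 ^ 2) * volume E := by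
  obtain ⟨p, p', hdet, him⟩ := cylPre_eq_image a m ha
  obtain ⟨hq, hq', hqq⟩ := dens_bounds a m ha
  rw [him E hE]
  set q := (dens a m).1
  set q' := (dens a m).2
  have hdet0 : p' * q - p * q' ≠ 0 := by
    intro h; rw [h] at hdet; simp at hdet
  have hden : ∀ t ∈ E, 0 < q + t * q' := fun t ht => by
    have := (hE ht).1.1
    positivity
  have hderiv : ∀ t ∈ E, HasDerivWithinAt (fun t => (p + t * p') / (q + t * q'))
      ((p' * q - p * q') / (q + t * q') ^ 2) E t := fun t ht => by
    have h1 : HasDerivAt (fun t : ℝ => p + t * p') p' t := by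
      simpa using ((hasDerivAt_id t).mul_const p').const_add p
    have h2 : HasDerivAt (fun t : ℝ => q + t * q') q' t := by
      simpa using ((hasDerivAt_id t).mul_const q').const_add q
    have h3 := (h1.fun_div h2 (hden t ht).ne').hasDerivWithinAt (s := E)
    have e : p' * q - p * q' = p' * (q + t * q') - (p + t * p') * q' := by ring
    rw [e]
    exact h3
  have hinj : Set.InjOn (fun t => (p + t * p') / (q + t * q')) E := by
    intro s hs t ht hst
    simp only at hst
    rw [div_eq_div_iff (hden s hs).ne' (hden t ht).ne'] at hst
    have : (p' * q - p * q') * (s - t) = 0 := by linear_combination hst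
    rcases mul_eq_zero.1 this with h | h
    · exact absurd h hdet0
    · linarith
  have hvol := lintegral_image_eq_lintegral_abs_deriv_mul hm hderiv hinj fun _ => 1
  simp only [mul_one, setLIntegral_one] at hvol
  rw [hvol]
  have habs : ∀ t, |(p' * q - p * q') / (q + t * q') ^ 2| = 1 / (q + t * q') ^ 2 := fun t => by
    rw [abs_div, hdet, abs_of_nonneg (sq_nonneg (q + t * q'))]
  rw [← setLIntegral_const, ← setLIntegral_const]
  constructor
  · refine setLIntegral_mono' hm fun t ht => ENNReal.ofReal_le_ofReal ?_
    rw [habs]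
    have h0 := hden t ht
    have h1 : q + t * q' ≤ 2 * q := by nlinarith [(hE ht).1.1, (hE ht).1.2]
    refine one_div_le_one_div_of_le (by positivity) ?_
    nlinarith
  · refine setLIntegral_mono' hm fun t ht => ENNReal.ofReal_le_ofReal ?_
    rw [habs]
    have h1 : q ≤ q + t * q' := by nlinarith [(hE ht).1.1]
    refine one_div_le_one_div_of_le (by positivity) ?_
    nlinarith

theorem volume_irrUnit_inter (s : Set ℝ) : volume (irrUnit ∩ s) = volume (Set.Ioo 0 1 ∩ s) := by
  have h : irrUnit ∩ s = (Set.Ioo 0 1 ∩ s) \ Set.range ((↑) : ℚ → ℝ) := by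
    ext x
    simp only [irrUnit, Irrational, Set.mem_inter_iff, Set.mem_ofPred_eq, Set.mem_sdiff]
    tauto
  rw [h, measure_sdiff_null ((Set.countable_range _).measure_zero _)]

theorem volume_irrUnit : volume irrUnit = 1 := by
  have := volume_irrUnit_inter Set.univ
  simpa using this

/-- On a cylinder, pulling back by the iterate of the Gauss map distorts relative measure by a
factor of at most `4`. -/
theorem cylPre_distortion (a : ℕ → ℕ) (m : ℕ) (ha : ∀ i, 1 ≤ i → i ≤ m → 1 ≤ a i)
    (E : Set ℝ) (hE : E ⊆ irrUnit) (hm : MeasurableSet E) :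
    ENNReal.ofReal (1 / 4) * volume E * volume (cyl m a) ≤ volume (cylPre m a E) ∧
    volume (cylPre m a E) ≤ ENNReal.ofReal 4 * volume E * volume (cyl m a) := by
  obtain ⟨h1, h2⟩ := cylPre_bounds a m ha E hE hm
  obtain ⟨h3, h4⟩ := cylPre_bounds a m ha irrUnit subset_rfl measurableSet_irrUnit
  rw [cylPre_irrUnit, volume_irrUnit, mul_one] at h3 h4
  have hq : 1 ≤ (dens a m).1 := (dens_bounds a m ha).1
  constructor
  · calc ENNReal.ofReal (1 / 4) * volume E * volume (cyl m a)
        ≤ ENNReal.ofReal (1 / 4) * volume E * ENNReal.ofReal (1 / (dens a m).1 ^ 2) := by gcongr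
      _ = ENNReal.ofReal (1 / 4) * ENNReal.ofReal (1 / (dens a m).1 ^ 2) * volume E := by ring
      _ = ENNReal.ofReal (1 / (4 * (dens a m).1 ^ 2)) * volume E := by
          rw [← ENNReal.ofReal_mul (by norm_num)]
          congr 2
          field_simp
      _ ≤ _ := h1
  · calc volume (cylPre m a E) ≤ ENNReal.ofReal (1 / (dens a m).1 ^ 2) * volume E := h2
      _ = ENNReal.ofReal 4 * ENNReal.ofReal (1 / (4 * (dens a m).1 ^ 2)) * volume E := by
          rw [← ENNReal.ofReal_mul (by norm_num)]
          congr 2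
          field_simp
      _ ≤ ENNReal.ofReal 4 * volume (cyl m a) * volume E := by gcongr
      _ = _ := by ring

/-! ### The set of points with `a_1 a_2 < l ≤ a_2 a_3` -/

/-- The irrationals in `(0,1)` with `a_1 a_2 < l ≤ a_2 a_3`. -/
def targetSet (l : ℝ) : Set ℝ :=
  irrUnit ∩ {t | ((pq t 1 * pq t 2 : ℕ) : ℝ) < l ∧ l ≤ ((pq t 2 * pq t 3 : ℕ) : ℝ)}

/-- The irrationals in `(0,1)` with `c a_1 ≥ l`. -/
def tailSet (l : ℝ) (c : ℕ) : Set ℝ := irrUnit ∩ {y | l ≤ ((c * pq y 1 : ℕ) : ℝ)}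

theorem measurableSet_targetSet (l : ℝ) : MeasurableSet (targetSet l) := by
  have h1 : Measurable fun t => ((pq t 1 * pq t 2 : ℕ) : ℝ) :=
    measurable_from_top.comp ((measurable_pq 1).mul (measurable_pq 2))
  have h2 : Measurable fun t => ((pq t 2 * pq t 3 : ℕ) : ℝ) :=
    measurable_from_top.comp ((measurable_pq 2).mul (measurable_pq 3))
  exact measurableSet_irrUnit.inter
    ((measurableSet_lt h1 measurable_const).inter (measurableSet_le measurable_const h2))

theorem measurableSet_tailSet (l : ℝ) (c : ℕ) : MeasurableSet (tailSet l c) := by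
  refine measurableSet_irrUnit.inter ?_
  exact measurableSet_le measurable_const
      (measurable_from_top.comp ((measurable_pq 1).const_mul c))

theorem volume_tailSet (l : ℝ) (c : ℕ) (hc : 1 ≤ c) (hcl : (c : ℝ) < l) :
    ENNReal.ofReal (c / (2 * l)) ≤ volume (tailSet l c) ∧
      volume (tailSet l c) ≤ ENNReal.ofReal (c / l) := by
  have hc' : (1 : ℝ) ≤ c := by exact_mod_cast hc
  have hl : 0 < l := by linarith
  have hr1 : 1 < l / c := by rw [lt_div_iff₀ (by positivity)]; linarith
  set k := ⌈l / c⌉₊ with hk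
  have hk1 : l / c ≤ k := Nat.le_ceil _
  have hk2 : (k : ℝ) < l / c + 1 := Nat.ceil_lt_add_one (by positivity)
  have hk0 : (1 : ℝ) < k := by linarith
  have hset : tailSet l c = irrUnit ∩ Set.Ioc 0 (1 / (k : ℝ)) := by
    ext y
    simp only [tailSet, Set.mem_inter_iff, Set.mem_ofPred_eq]
    refine and_congr_right fun hy => ?_
    have hy0 := hy.1.1
    have h1 : (l ≤ ((c * pq y 1 : ℕ) : ℝ)) ↔ k ≤ pq y 1 := by
      rw [hk, Nat.ceil_le, div_le_iff₀ (by positivity)]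
      push_cast
      rw [mul_comm]
    rw [h1]
    show k ≤ ⌊1 / y⌋₊ ↔ _
    rw [Nat.le_floor_iff (by positivity), le_div_iff₀ hy0, Set.mem_Ioc, le_div_iff₀ (by positivity),
      mul_comm]
    simp [hy0]
  have hvol : volume (tailSet l c) = ENNReal.ofReal (1 / k) := by
    rw [hset, volume_irrUnit_inter, Set.inter_eq_right.2, Real.volume_Ioc, sub_zero]
    rintro y ⟨h0, h1⟩
    refine ⟨h0, h1.trans_lt ?_⟩
    rw [div_lt_one (by positivity)]; exact hk0
  rw [hvol]
  constructor
  · refine ENNReal.ofReal_le_ofReal ?_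
    rw [show (c : ℝ) / (2 * l) = 1 / (2 * (l / c)) by field_simp]
    exact one_div_le_one_div_of_le (by positivity) (by linarith)
  · refine ENNReal.ofReal_le_ofReal ?_
    rw [show (c : ℝ) / l = 1 / (l / c) by field_simp]
    exact one_div_le_one_div_of_le (by positivity) hk1

/-- A sequence of partial quotients starting with `b, c`. -/
def pairSeq (b c : ℕ) : ℕ → ℕ := fun i => if i = 1 then b else c

/-- The points of the cylinder `I_2(b,c)` with `c a_3 ≥ l`; for `bc < l` this is the part of `targetSet l`
in that cylinder. -/
def piece (l : ℝ) (b c : ℕ) : Set ℝ := cylPre 2 (pairSeq b c) (tailSet l c)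

theorem mem_piece (l : ℝ) (b c : ℕ) (x : ℝ) : x ∈ piece l b c ↔
    x ∈ irrUnit ∧ pq x 1 = b ∧ pq x 2 = c ∧ l ≤ ((c * pq x 3 : ℕ) : ℝ) := by
  have h3 : pq x 3 = pq (gaussMap^[2] x) 1 := pq_add x 2 0
  rw [h3]
  constructor
  · rintro ⟨⟨h1, h2, h4⟩, -, h5⟩
    exact ⟨⟨h1, h2⟩, h4 1 (by omega) (by omega), h4 2 (by omega) (by omega), h5⟩
  · rintro ⟨h1, h2, h4, h5⟩
    refine ⟨⟨h1.1, h1.2, fun i hi hi' => ?_⟩, gaussMap_iterate_mem h1 2, h5⟩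
    obtain rfl | rfl : i = 1 ∨ i = 2 := by omega
    · exact h2
    · exact h4

theorem measurableSet_piece (l : ℝ) (b c : ℕ) : MeasurableSet (piece l b c) := by
  have : piece l b c = irrUnit ∩ ({x | pq x 1 = b} ∩ ({x | pq x 2 = c} ∩
      {x | l ≤ ((c * pq x 3 : ℕ) : ℝ)})) := by
    ext x; exact mem_piece l b c x
  rw [this]
  refine measurableSet_irrUnit.inter (MeasurableSet.inter ?_ (MeasurableSet.inter ?_ ?_))
  · exact measurable_pq 1 (measurableSet_singleton b)
  · exact measurable_pq 2 (measurableSet_singleton c)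
  · exact measurableSet_le measurable_const
      (measurable_from_top.comp ((measurable_pq 3).const_mul c))

theorem volume_piece (l : ℝ) (b c : ℕ) (hb : 1 ≤ b) (hc : 1 ≤ c) (hcl : (c : ℝ) < l) :
    ENNReal.ofReal (1 / (32 * b ^ 2 * c * l)) ≤ volume (piece l b c) ∧
      volume (piece l b c) ≤ ENNReal.ofReal (1 / (b ^ 2 * c * l)) := by
  have hb' : (1 : ℝ) ≤ b := by exact_mod_cast hb
  have hc' : (1 : ℝ) ≤ c := by exact_mod_cast hc
  have hl : 0 < l := by linarith
  have ha : ∀ i, 1 ≤ i → i ≤ 2 → 1 ≤ pairSeq b c i := fun i _ _ => by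
    unfold pairSeq; split_ifs <;> assumption
  have hq : (dens (pairSeq b c) 2).1 = b * c + 1 := by simp [dens, pairSeq]
  obtain ⟨h1, h2⟩ := cylPre_bounds _ 2 ha (tailSet l c) Set.inter_subset_left
    (measurableSet_tailSet l c)
  obtain ⟨h3, h4⟩ := volume_tailSet l c hc hcl
  rw [hq] at h1 h2
  have hbc : (1 : ℝ) ≤ b * c := by nlinarith
  constructor
  · refine le_trans ?_ (le_trans (mul_le_mul_right h3 _) h1)
    rw [← ENNReal.ofReal_mul (by positivity)]
    refine ENNReal.ofReal_le_ofReal ?_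
    calc (1 : ℝ) / (32 * b ^ 2 * c * l) = 1 / (4 * (2 * (b * c)) ^ 2) * (c / (2 * l)) := by
          field_simp; norm_num
      _ ≤ _ := by gcongr; linarith
  · refine le_trans h2 (le_trans (mul_le_mul_right h4 _) ?_)
    rw [← ENNReal.ofReal_mul (by positivity)]
    refine ENNReal.ofReal_le_ofReal ?_
    calc 1 / ((b : ℝ) * c + 1) ^ 2 * (c / l) ≤ 1 / (b * c : ℝ) ^ 2 * (c / l) := by
          gcongr; linarith
      _ = _ := by field_simp

theorem sum_inv_sq_le (N : ℕ) : ∑ b ∈ Finset.Icc 1 N, (1 : ℝ) / (b : ℝ) ^ 2 ≤ 2 := by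
  -- the telescoping bound carried by the induction is `2 - 1/N`; at `N = 0` it reads `0 ≤ 2`
  suffices h : ∑ b ∈ Finset.Icc 1 N, (1 : ℝ) / (b : ℝ) ^ 2 ≤ 2 - 1 / N by
    have : (0 : ℝ) ≤ 1 / N := by positivity
    linarith
  induction N with
  | zero => norm_num
  | succ k ih =>
    rw [Finset.sum_Icc_succ_top (by omega)]
    rcases Nat.eq_zero_or_pos k with rfl | hk
    · norm_num
    · have hk' : (0 : ℝ) < k := by exact_mod_cast hk
      have h1 : (1 : ℝ) / ((k + 1 : ℕ) : ℝ) ^ 2 ≤ 1 / k - 1 / ((k + 1 : ℕ) : ℝ) := by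
        push_cast
        rw [div_sub_div _ _ hk'.ne' (by positivity), div_le_div_iff₀ (by positivity) (by positivity)]
        nlinarith
      linarith

theorem volume_targetSet (l : ℝ) (hl : 2 ≤ l) :
    ENNReal.ofReal (1 / 32 * Real.log l / l) ≤ volume (targetSet l) ∧
      volume (targetSet l) ≤ ENNReal.ofReal (6 * Real.log l / l) := by
  -- `N` is the largest integer below `l`
  set N := ⌈l⌉₊ - 1 with hN
  have hceil : 2 ≤ ⌈l⌉₊ := by
    have : (2 : ℝ) ≤ ⌈l⌉₊ := hl.trans (Nat.le_ceil l)
    exact_mod_cast this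
  have hNl : ∀ c : ℕ, c ≤ N ↔ (c : ℝ) < l := fun c => by
    rw [← Nat.lt_ceil]; omega
  have hl0 : 0 < l := by linarith
  have hharm : ∑ c ∈ Finset.Icc 1 N, (1 : ℝ) / c = (harmonic N : ℝ) := by
    rw [harmonic_eq_sum_Icc]; push_cast; simp
  constructor
  · have hsub : (⋃ c ∈ Finset.Icc 1 N, piece l 1 c) ⊆ targetSet l := by
      intro x hx
      simp only [Set.mem_iUnion, Finset.mem_Icc, mem_piece] at hx
      obtain ⟨c, hc, hx, h1, h2, h3⟩ := hx
      refine ⟨hx, ?_, ?_⟩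
      · rw [h1, h2, one_mul]; exact (hNl c).1 hc.2
      · rw [h2]; exact h3
    refine le_trans ?_ (measure_mono hsub)
    rw [measure_biUnion_finset ?_ fun c _ => measurableSet_piece l 1 c]
    · calc ENNReal.ofReal (1 / 32 * Real.log l / l)
          ≤ ENNReal.ofReal (∑ c ∈ Finset.Icc 1 N, 1 / (32 * ((1 : ℕ) : ℝ) ^ 2 * c * l)) := by
            refine ENNReal.ofReal_le_ofReal ?_
            have h1 : Real.log l ≤ harmonic N := by
              refine le_trans (Real.log_le_log hl0 ?_) (log_add_one_le_harmonic N)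
              have : N + 1 = ⌈l⌉₊ := by omega
              rw [this]
              exact Nat.le_ceil l
            calc 1 / 32 * Real.log l / l ≤ 1 / 32 * (harmonic N : ℝ) / l := by gcongr
              _ = ∑ c ∈ Finset.Icc 1 N, 1 / (32 * ((1 : ℕ) : ℝ) ^ 2 * c * l) := by
                rw [← hharm, Finset.mul_sum, Finset.sum_div]
                refine Finset.sum_congr rfl fun c hc => ?_
                have : (0 : ℝ) < c := by exact_mod_cast (Finset.mem_Icc.1 hc).1
                field_simp
                norm_num
        _ = ∑ c ∈ Finset.Icc 1 N, ENNReal.ofReal (1 / (32 * ((1 : ℕ) : ℝ) ^ 2 * c * l)) :=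
            ENNReal.ofReal_sum_of_nonneg fun c _ => by positivity
        _ ≤ _ := Finset.sum_le_sum fun c hc => by
            obtain ⟨hc1, hc2⟩ := Finset.mem_Icc.1 hc
            exact (volume_piece l 1 c le_rfl hc1 ((hNl c).1 hc2)).1
    · intro c _ d _ hcd
      refine Set.disjoint_left.2 fun x hx hx' => hcd ?_
      rw [mem_piece] at hx hx'
      exact hx.2.2.1.symm.trans hx'.2.2.1
  · have hsub : targetSet l ⊆ ⋃ b ∈ Finset.Icc 1 N, ⋃ c ∈ Finset.Icc 1 N, piece l b c := by
      rintro x ⟨hx, h1, h2⟩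
      have hp1 := pq_pos hx 1
      have hp2 := pq_pos hx 2
      have h3 := (hNl _).2 h1
      simp only [Set.mem_iUnion, Finset.mem_Icc, mem_piece]
      exact ⟨pq x 1, ⟨hp1, by nlinarith⟩, pq x 2, ⟨hp2, by nlinarith⟩, hx, rfl, rfl, h2⟩
    have hlog2 : Real.log 2 ≤ Real.log l := Real.log_le_log (by norm_num) hl
    have hlog : 1 ≤ 2 * Real.log l := by linarith [Real.log_two_gt_d9]
    have hup : (harmonic N : ℝ) ≤ 3 * Real.log l := by
      have h1 : (N : ℝ) ≤ l := ((hNl N).1 le_rfl).le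
      have h2 : (0 : ℝ) < N := by exact_mod_cast (by omega : 0 < N)
      linarith [harmonic_le_one_add_log N, Real.log_le_log h2 h1]
    calc volume (targetSet l)
        ≤ volume (⋃ b ∈ Finset.Icc 1 N, ⋃ c ∈ Finset.Icc 1 N, piece l b c) := measure_mono hsub
      _ ≤ ∑ b ∈ Finset.Icc 1 N, ∑ c ∈ Finset.Icc 1 N, volume (piece l b c) :=
          (measure_biUnion_finset_le _ _).trans
            (Finset.sum_le_sum fun b _ => measure_biUnion_finset_le _ _)
      _ ≤ ∑ b ∈ Finset.Icc 1 N, ∑ c ∈ Finset.Icc 1 N,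
            ENNReal.ofReal (1 / ((b : ℝ) ^ 2 * c * l)) :=
          Finset.sum_le_sum fun b hb => Finset.sum_le_sum fun c hc => by
            obtain ⟨hc1, hc2⟩ := Finset.mem_Icc.1 hc
            exact (volume_piece l b c (Finset.mem_Icc.1 hb).1 hc1 ((hNl c).1 hc2)).2
      _ = ENNReal.ofReal (∑ b ∈ Finset.Icc 1 N, ∑ c ∈ Finset.Icc 1 N,
            1 / ((b : ℝ) ^ 2 * c * l)) := by
          rw [ENNReal.ofReal_sum_of_nonneg fun b _ =>
            Finset.sum_nonneg fun c _ => by positivity]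
          refine Finset.sum_congr rfl fun b _ => ?_
          rw [ENNReal.ofReal_sum_of_nonneg fun c _ => by positivity]
      _ = ENNReal.ofReal ((∑ b ∈ Finset.Icc 1 N, 1 / (b : ℝ) ^ 2) * (harmonic N : ℝ) / l) := by
          rw [← hharm, Finset.sum_mul_sum, Finset.sum_div]
          congr 1
          refine Finset.sum_congr rfl fun b _ => ?_
          rw [Finset.sum_div]
          refine Finset.sum_congr rfl fun c _ => ?_
          rw [div_mul_div_comm, div_div, one_mul]
      _ ≤ ENNReal.ofReal (6 * Real.log l / l) := by
          refine ENNReal.ofReal_le_ofReal ?_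
          have h0 : (0 : ℝ) ≤ harmonic N := by
            rw [← hharm]; exact Finset.sum_nonneg fun c _ => by positivity
          have := sum_inv_sq_le N
          refine div_le_div_of_nonneg_right ?_ hl0.le
          nlinarith

/-! ### The set `H̃_n` -/

theorem Htilde_eq (m : ℕ) (l : ℝ) (a : ℕ → ℕ) :
    Htilde (m + 2) l a = cylPre m a (targetSet l) := by
  ext x
  have e1 : pq x (m + 1) = pq (gaussMap^[m] x) 1 := pq_add x m 0
  have e2 : pq x (m + 2) = pq (gaussMap^[m] x) 2 := pq_add x m 1
  have e3 : pq x (m + 3) = pq (gaussMap^[m] x) 3 := pq_add x m 2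
  simp only [Htilde, cylPre, targetSet, Set.mem_iUnion, Set.mem_inter_iff, Set.mem_ofPred_eq,
    ← e1, ← e2, ← e3, exists_prop]
  have hm : m + 2 - 1 = m + 1 := by omega
  rw [hm]
  constructor
  · rintro ⟨b, c, d, -, -, -, -, h1, h2, hx⟩
    have hb : pq x (m + 1) = b := by
      rw [hx.2.2 (m + 1) (by omega) (by omega)]; simp
    have hc : pq x (m + 2) = c := by
      rw [hx.2.2 (m + 2) (by omega) (by omega)]; simp
    have hd : pq x (m + 3) = d := by
      rw [hx.2.2 (m + 3) (by omega) (by omega)]; simp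
    refine ⟨⟨hx.1, hx.2.1, fun i hi hi' => ?_⟩, gaussMap_iterate_mem ⟨hx.1, hx.2.1⟩ m, ?_, ?_⟩
    · rw [hx.2.2 i hi (by omega), Function.update_of_ne (by omega), Function.update_of_ne (by omega),
        Function.update_of_ne (by omega)]
    · rwa [hb, hc]
    · rwa [hc, hd]
  · rintro ⟨hx, -, h1, h2⟩
    have hS : x ∈ irrUnit := ⟨hx.1, hx.2.1⟩
    have hb := pq_pos hS (m + 1)
    have hc := pq_pos hS (m + 2)
    refine ⟨pq x (m + 1), pq x (m + 2), pq x (m + 3), hb, hc, pq_pos hS _, Nat.mul_pos hb hc, h1,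
      h2, hx.1, hx.2.1, fun i hi hi' => ?_⟩
    simp only [Function.update_apply]
    split_ifs with h3 h4 h5
    · rw [h3]
    · rw [h4]
    · rw [h5]
    · exact hx.2.2 i hi (by omega)

theorem measure_Htilde_asymp : ∃ c C : ℝ, 0 < c ∧ c ≤ C ∧
    ∀ n : ℕ, 3 ≤ n → ∀ l : ℝ, 2 ≤ l → ∀ a : ℕ → ℕ,
      (∀ i : ℕ, 1 ≤ i → i ≤ n - 2 → 1 ≤ a i) →
      ENNReal.ofReal (c * Real.log l / l) * volume (cyl (n - 2) a) ≤ volume (Htilde n l a) ∧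
      volume (Htilde n l a) ≤ ENNReal.ofReal (C * Real.log l / l) * volume (cyl (n - 2) a) := by
  refine ⟨1 / 128, 24, by norm_num, by norm_num, fun n hn l hl a ha => ?_⟩
  obtain ⟨m, rfl⟩ : ∃ m, n = m + 2 := ⟨n - 2, by omega⟩
  rw [Nat.add_sub_cancel] at ha ⊢
  rw [Htilde_eq]
  obtain ⟨h1, h2⟩ := cylPre_distortion a m ha (targetSet l) Set.inter_subset_left
    (measurableSet_targetSet l)
  obtain ⟨h3, h4⟩ := volume_targetSet l hl
  constructor
  · refine le_trans ?_ h1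
    refine mul_le_mul_left (le_trans (le_of_eq ?_) (mul_le_mul_right h3 _)) _
    rw [← ENNReal.ofReal_mul (by norm_num)]
    congr 1
    ring
  · refine h2.trans ?_
    refine mul_le_mul_left (le_trans (mul_le_mul_right h4 _) (le_of_eq ?_)) _
    rw [← ENNReal.ofReal_mul (by norm_num)]
    congr 1
    ring
end

section
/- Let φ: ℕ → (0,∞) be non-decreasing with φ(n) → ∞, and define ψ(n) = max{φ(n), n·log φ(n)}. If Σ_{n=1}^∞ (φ(n) + n·(log φ(n))²)/φ(n)² = ∞, then also Σ_{n=1}^∞ (ψ(n) + n·(log ψ(n))²)/ψ(n)² = ∞. -/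
/-!
Call `n` bad if `φ n < n * log (φ n)`, so that `ψ n = n * log (φ n)`; at every other index `ψ n = φ n`
and the two series have the same term. If there are only finitely many bad indices, the two series
have the same tails. Otherwise, let `n` be a large bad index and `m ≤ n` be large. Since `ψ` is
eventually non-decreasing and `log x / x` is non-increasing on `[e, ∞)`,
`log (ψ m) / ψ m ≥ log (ψ n) / ψ n ≥ log (φ n) / ψ n = 1 / n`,
so the `m`-th term of the second series is at least `m / n ^ 2`. Summing over `n / 2 < m ≤ n` gives a
block of size at least `1 / 4`; this happens for infinitely many `n`, which contradicts the Cauchy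
criterion.
-/

open Filter Topology in
/-- A series with blocks `∑_{n/2 < m ≤ n} f m ≥ 1/4` for infinitely many `n` diverges. -/
lemma not_summable_of_frequently_block (f : ℕ → ℝ)
    (h : ∃ᶠ n : ℕ in atTop, ∀ m, n / 2 < m → m ≤ n → (m : ℝ) / (n : ℝ) ^ 2 ≤ f m) :
    ¬ Summable f := by
  intro hs
  have h1 := hs.hasSum.tendsto_sum_nat
  have t1 : Tendsto (fun n : ℕ => n + 1) atTop atTop := tendsto_add_atTop_nat 1
  have t2 : Tendsto (fun n : ℕ => n / 2 + 1) atTop atTop :=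
    t1.comp (Nat.tendsto_div_const_atTop two_ne_zero)
  have h2 := (h1.comp t1).sub (h1.comp t2)
  rw [sub_self] at h2
  have h3 := h2.eventually (gt_mem_nhds (show (0 : ℝ) < 1 / 4 by norm_num))
  obtain ⟨n, hn, hlt, hn1⟩ := (h.and_eventually (h3.and (eventually_ge_atTop 1))).exists
  simp only [Function.comp] at hlt
  rw [← Finset.sum_Ico_eq_sub f (show n / 2 + 1 ≤ n + 1 by omega)] at hlt
  have hn0 : (0 : ℝ) < n := by exact_mod_cast hn1
  have hb : ∀ m ∈ Finset.Ico (n / 2 + 1) (n + 1), 1 / (2 * (n : ℝ)) ≤ f m := by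
    intro m hm
    rw [Finset.mem_Ico] at hm
    refine le_trans ?_ (hn m (by omega) (by omega))
    have : (n : ℝ) ≤ 2 * m := by exact_mod_cast (show n ≤ 2 * m by omega)
    rw [div_le_div_iff₀ (by positivity) (by positivity)]
    nlinarith
  have hc := Finset.card_nsmul_le_sum _ _ _ hb
  rw [Nat.card_Ico, nsmul_eq_mul] at hc
  have hcard : (n : ℝ) ≤ 2 * ((n + 1 - (n / 2 + 1) : ℕ) : ℝ) := by
    exact_mod_cast (show n ≤ 2 * (n + 1 - (n / 2 + 1)) by omega)
  have : (1 : ℝ) / 4 ≤ ((n + 1 - (n / 2 + 1) : ℕ) : ℝ) * (1 / (2 * (n : ℝ))) := by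
    rw [mul_one_div, div_le_div_iff₀ (by positivity) (by positivity)]
    linarith
  linarith

open Filter Topology in
theorem aux_series_divergence (φ : ℕ → ℝ) (hpos : ∀ n, 0 < φ n) (hmono : Monotone φ)
    (htends : Filter.Tendsto φ Filter.atTop Filter.atTop) (ψ : ℕ → ℝ)
    (hψ : ∀ n : ℕ, ψ n = max (φ n) ((n : ℝ) * Real.log (φ n)))
    (hdiv : ¬ Summable fun n : ℕ => (φ n + (n : ℝ) * Real.log (φ n) ^ 2) / φ n ^ 2) :
    ¬ Summable fun n : ℕ => (ψ n + (n : ℝ) * Real.log (ψ n) ^ 2) / ψ n ^ 2 := by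
  by_cases hbad : ∃ᶠ n : ℕ in atTop, φ n < n * Real.log (φ n)
  · apply not_summable_of_frequently_block
    obtain ⟨N, hN⟩ := eventually_atTop.1 (htends.eventually_ge_atTop (Real.exp 1))
    refine (hbad.and_eventually (eventually_ge_atTop (2 * N + 1))).mono ?_
    rintro n ⟨hn, hnN⟩ m hm hmn
    have hφψ : ∀ k, φ k ≤ ψ k := fun k => hψ k ▸ le_max_left _ _
    have hem := hN m (by omega)
    have hen := hN n (by omega)
    have h1 : ∀ x : ℝ, Real.exp 1 ≤ x → 1 ≤ Real.log x := fun x hx =>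
      (Real.le_log_iff_exp_le ((Real.exp_pos 1).trans_le hx)).2 hx
    have hLm := h1 _ hem
    have hLn := h1 _ hen
    have hn0 : (0 : ℝ) < n := by exact_mod_cast (show 0 < n by omega)
    have hψn : ψ n = n * Real.log (φ n) := by rw [hψ]; exact max_eq_right hn.le
    have hψmn : ψ m ≤ ψ n := by
      rw [hψ m, hψ n]
      have := Real.log_le_log (hpos m) (hmono hmn)
      have hmn' : (m : ℝ) ≤ n := by exact_mod_cast hmn
      exact max_le_max (hmono hmn) (by gcongr)
    have hanti : Real.log (ψ n) / ψ n ≤ Real.log (ψ m) / ψ m :=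
      Real.log_div_self_antitoneOn (hem.trans (hφψ m)) (hen.trans (hφψ n)) hψmn
    have hψm0 : 0 < ψ m := (hpos m).trans_le (hφψ m)
    have hψn0 : 0 < ψ n := (hpos n).trans_le (hφψ n)
    have hlow : 1 / (n : ℝ) ≤ Real.log (ψ m) / ψ m := by
      refine le_trans ?_ hanti
      have := Real.log_le_log (hpos n) (hφψ n)
      rw [div_le_div_iff₀ hn0 hψn0, one_mul]
      nlinarith
    calc (m : ℝ) / (n : ℝ) ^ 2 = m * (1 / (n : ℝ)) ^ 2 := by ring
      _ ≤ m * (Real.log (ψ m) / ψ m) ^ 2 := by gcongr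
      _ = (m * Real.log (ψ m) ^ 2) / ψ m ^ 2 := by ring
      _ ≤ _ := by gcongr; linarith
  · rw [not_frequently] at hbad
    have heq : (fun n : ℕ => (ψ n + (n : ℝ) * Real.log (ψ n) ^ 2) / ψ n ^ 2) =ᶠ[atTop]
        fun n : ℕ => (φ n + (n : ℝ) * Real.log (φ n) ^ 2) / φ n ^ 2 := by
      filter_upwards [hbad] with n hn
      rw [hψ n, max_eq_left (not_lt.1 hn)]
    intro hs
    refine hdiv ((summable_congr_cofinite ?_).1 hs)
    rw [Nat.cofinite_eq_atTop]
    exact heq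
end
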